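/- arXiv:2208.11938 — 5 statements merged into one kernel-verified Lean document; each statement's English description precedes it below -/
import Mathlib

section
/- Let V be a nonzero finite-dimensional complex vector space and W a finite subgroup of GL(V) generated by its reflections, such that every reflection in W has order 2 and V is an irreducible W-module (the only W-invariant subspaces of V are 0 and V). Let R be the set of reflections of W, let W₀ ⊊ W be a proper parabolic subgroup of W, and let R₀ = R ∩ W₀. Then W is generated by R \ R₀. -/
open Module

/-- A reflection: a nontrivial invertible linear endomorphism whose fixed subspace
`Ker(w - 1)` has codimension 1. -/
def IsReflection {V : Type*} [AddCommGroup V] [Module ℂ V]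
    (w : (Module.End ℂ V)ˣ) : Prop :=
  w ≠ 1 ∧ finrank ℂ (LinearMap.ker ((w : Module.End ℂ V) - 1)) + 1 = finrank ℂ V

/-- Conjugates of reflections are reflections. -/
theorem IsReflection.conj {V : Type*} [AddCommGroup V] [Module ℂ V]
    {w : (Module.End ℂ V)ˣ} (hw : IsReflection w) (g : (Module.End ℂ V)ˣ) :
    IsReflection (g * w * g⁻¹) := by
  refine ⟨fun h => hw.1 (conj_eq_one_iff.mp h), ?_⟩
  rw [← hw.2]
  congr 1
  let e : V ≃ₗ[ℂ] V := LinearMap.GeneralLinearGroup.generalLinearEquiv ℂ V g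
  have hker : LinearMap.ker (((g * w * g⁻¹ : (Module.End ℂ V)ˣ) : Module.End ℂ V) - 1) =
      (LinearMap.ker ((w : Module.End ℂ V) - 1)).map (e : V →ₗ[ℂ] V) := by
    ext v
    rw [Submodule.mem_map_equiv]
    have he : e.symm v = (↑g⁻¹ : Module.End ℂ V) v := rfl
    have hcancel (x : V) : (g : Module.End ℂ V) ((↑g⁻¹ : Module.End ℂ V) x) = x := by
      rw [← Module.End.mul_apply, Units.mul_inv, Module.End.one_apply]
    have hcancel' (x : V) : (↑g⁻¹ : Module.End ℂ V) ((g : Module.End ℂ V) x) = x := by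
      rw [← Module.End.mul_apply, Units.inv_mul, Module.End.one_apply]
    simp only [LinearMap.mem_ker, LinearMap.sub_apply, Module.End.one_apply, sub_eq_zero, he,
      Units.val_mul, Module.End.mul_apply]
    constructor
    · intro h
      rw [← hcancel' ((w : Module.End ℂ V) _), h]
    · intro h
      rw [h, hcancel]
  rw [hker]
  exact LinearEquiv.finrank_map_eq e _

/-- If conjugation by every element of `H` maps `S` into itself, then `H` normalizes the
subgroup generated by `S`. -/
theorem Subgroup.le_normalizer_closure_of_conj_mem {G : Type*} [Group G] {H : Subgroup G}
    {S : Set G} (hS : ∀ g ∈ H, ∀ s ∈ S, g * s * g⁻¹ ∈ S) :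
    H ≤ Subgroup.normalizer (Subgroup.closure S : Set G) := by
  have key : ∀ g ∈ H, ∀ n ∈ Subgroup.closure S, g * n * g⁻¹ ∈ Subgroup.closure S := by
    intro g hg n hn
    have hle : Subgroup.closure S ≤ (Subgroup.closure S).comap (MulAut.conj g).toMonoidHom :=
      (Subgroup.closure_le _).mpr fun s hs => Subgroup.subset_closure (hS g hg s hs)
    exact hle hn
  intro g hg
  rw [Subgroup.mem_normalizer_iff]
  refine fun n => ⟨key g hg n, fun h => ?_⟩
  simpa [mul_assoc] using key g⁻¹ (H.inv_mem hg) _ h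

/-- an irreducible complex 2-reflection group is generated by the
reflections lying outside any proper parabolic subgroup. -/
theorem reflection_group_generated_by_complement_of_parabolic
    {V : Type*} [AddCommGroup V] [Module ℂ V] [FiniteDimensional ℂ V] [Nontrivial V]
    (W W₀ : Subgroup (Module.End ℂ V)ˣ)
    (hWfin : (W : Set (Module.End ℂ V)ˣ).Finite)
    (R R₀ : Set (Module.End ℂ V)ˣ)
    (hR : R = {w : (Module.End ℂ V)ˣ | w ∈ W ∧ IsReflection w})
    (hgen : Subgroup.closure R = W)
    (horder : ∀ w ∈ R, w * w = 1)
    (hirr : ∀ U : Submodule ℂ V,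
      (∀ w ∈ W, ∀ v ∈ U, (w : Module.End ℂ V) v ∈ U) → U = ⊥ ∨ U = ⊤)
    (hpar : ∃ U : Submodule ℂ V, ∀ w : (Module.End ℂ V)ˣ,
      w ∈ W₀ ↔ w ∈ W ∧ ∀ v ∈ U, (w : Module.End ℂ V) v = v)
    (hproper : W₀ < W)
    (hR₀ : R₀ = R ∩ (W₀ : Set (Module.End ℂ V)ˣ)) :
    Subgroup.closure (R \ R₀) = W := by
  obtain ⟨U, hU⟩ := hpar
  have hRW : R ⊆ W := by rw [hR]; exact fun w hw => hw.1
  have hRconj : ∀ g ∈ W, ∀ r ∈ R, g * r * g⁻¹ ∈ R := by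
    rw [hR]
    exact fun g hg r hr =>
      ⟨W.mul_mem (W.mul_mem hg hr.1) (W.inv_mem hg), hr.2.conj g⟩
  have hdiff : ∀ r, r ∈ R \ R₀ ↔ r ∈ R ∧ r ∉ W₀ := by
    intro r
    simp only [hR₀, Set.mem_sdiff, Set.mem_inter_iff, SetLike.mem_coe]
    tauto
  set N := Subgroup.closure (R \ R₀)
  have hNW : N ≤ W := (Subgroup.closure_le _).mpr (Set.sdiff_subset.trans hRW)
  -- `N` is normalized by `W₀` and by itself, hence by all of `W`.
  have hW₀N : W₀ ≤ Subgroup.normalizer (N : Set (Module.End ℂ V)ˣ) := by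
    refine Subgroup.le_normalizer_closure_of_conj_mem fun g hg r hr => ?_
    rw [hdiff] at hr ⊢
    refine ⟨hRconj g (hproper.le hg) r hr.1, fun h => hr.2 ?_⟩
    simpa [mul_assoc] using W₀.mul_mem (W₀.mul_mem (W₀.inv_mem hg) h) hg
  have hWN : W ≤ Subgroup.normalizer (N : Set (Module.End ℂ V)ˣ) := by
    rw [← hgen, Subgroup.closure_le]
    intro r hr
    by_cases h : r ∈ W₀
    · exact hW₀N h
    · exact Subgroup.le_normalizer (Subgroup.subset_closure ((hdiff r).mpr ⟨hr, h⟩))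
  refine le_antisymm hNW ?_
  conv_lhs => rw [← hgen]
  rw [Subgroup.closure_le]
  intro r hr
  by_contra hrN
  -- Every conjugate of `r` lies outside `N`, hence fixes `U` pointwise.
  have hfix : ∀ g ∈ W, ∀ v ∈ U, ((g * r * g⁻¹ : (Module.End ℂ V)ˣ) : Module.End ℂ V) v = v := by
    intro g hg
    refine ((hU _).mp ?_).2
    by_contra h
    exact hrN ((Subgroup.mem_normalizer_iff.mp (hWN hg) r).mpr
      (Subgroup.subset_closure ((hdiff _).mpr ⟨hRconj g hg r hr, h⟩)))
  let F : Submodule ℂ V := ⨅ g : W,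
    LinearMap.ker (((g * r * (g : (Module.End ℂ V)ˣ)⁻¹ : (Module.End ℂ V)ˣ) :
      Module.End ℂ V) - 1)
  have hF : ∀ v, v ∈ F ↔
      ∀ g ∈ W, ((g * r * g⁻¹ : (Module.End ℂ V)ˣ) : Module.End ℂ V) v = v := by
    intro v
    simp only [F, Submodule.mem_iInf, LinearMap.mem_ker, LinearMap.sub_apply,
      Module.End.one_apply, sub_eq_zero, Subtype.forall]
  have hFinv : ∀ w ∈ W, ∀ v ∈ F, (w : Module.End ℂ V) v ∈ F := by
    intro w hw v hv
    rw [hF] at hv ⊢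
    intro g hg
    have h := congrArg (w : Module.End ℂ V) (hv (w⁻¹ * g) (W.mul_mem (W.inv_mem hw) hg))
    rw [← Module.End.mul_apply, ← Units.val_mul] at h
    rw [← Module.End.mul_apply, ← Units.val_mul]
    simpa only [mul_inv_rev, inv_inv, mul_assoc, mul_inv_cancel_left] using h
  have hUF : U ≤ F := fun v hv => (hF v).mpr fun g hg => hfix g hg v hv
  rcases hirr F hFinv with h | h
  · refine hproper.not_ge fun w hw => (hU w).mpr ⟨hw, fun v hv => ?_⟩
    have hv0 : v = 0 := (Submodule.mem_bot ℂ).mp (h ▸ hUF hv)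
    rw [hv0, map_zero]
  · have hr1 : r = 1 := by
      ext v
      simpa using (hF v).mp (h ▸ Submodule.mem_top) 1 W.one_mem
    exact hrN (hr1 ▸ N.one_mem)
end

section
/- Let (G, G⁺, Δ) be a Garside structure. For every x ∈ G there exist integers 0 ≤ m < n such that φ^m(x) = φ^n(x); consequently each of the elements φ^m(x), …, φ^{n−1}(x) is recurrent. -/
open scoped Pointwise Classical

/-- A Garside structure on a group `G`: a submonoid `pos` of positive elements with
trivial units, prefix and suffix lattice operations, and a Garside element `delta`. -/
structure GarsideStructure (G : Type*) [Group G] where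
  /-- the submonoid of positive elements -/
  pos : Submonoid G
  /-- the Garside element Δ -/
  delta : G
  /-- meet for the prefix order -/
  meet : G → G → G
  /-- join for the prefix order -/
  join : G → G → G
  /-- meet for the suffix order -/
  rmeet : G → G → G
  /-- join for the suffix order -/
  rjoin : G → G → G
  units_triv : ∀ a : G, a ∈ pos → a⁻¹ ∈ pos → a = 1
  meet_le_left : ∀ a b : G, (meet a b)⁻¹ * a ∈ pos
  meet_le_right : ∀ a b : G, (meet a b)⁻¹ * b ∈ pos
  le_meet : ∀ a b c : G, c⁻¹ * a ∈ pos → c⁻¹ * b ∈ pos → c⁻¹ * meet a b ∈ pos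
  le_join_left : ∀ a b : G, a⁻¹ * join a b ∈ pos
  le_join_right : ∀ a b : G, b⁻¹ * join a b ∈ pos
  join_le : ∀ a b c : G, a⁻¹ * c ∈ pos → b⁻¹ * c ∈ pos → (join a b)⁻¹ * c ∈ pos
  rmeet_le_left : ∀ a b : G, a * (rmeet a b)⁻¹ ∈ pos
  rmeet_le_right : ∀ a b : G, b * (rmeet a b)⁻¹ ∈ pos
  le_rmeet : ∀ a b c : G, a * c⁻¹ ∈ pos → b * c⁻¹ ∈ pos → rmeet a b * c⁻¹ ∈ pos
  rjoin_le_left : ∀ a b : G, rjoin a b * a⁻¹ ∈ pos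
  rjoin_le_right : ∀ a b : G, rjoin a b * b⁻¹ ∈ pos
  rjoin_le : ∀ a b c : G, c * a⁻¹ ∈ pos → c * b⁻¹ ∈ pos → c * (rjoin a b)⁻¹ ∈ pos
  delta_pos : delta ∈ pos
  /-- Δ is balanced: its positive prefixes coincide with its positive suffixes -/
  delta_balanced : ∀ s : G, s ∈ pos → (s⁻¹ * delta ∈ pos ↔ delta * s⁻¹ ∈ pos)
  /-- the set of simple elements (divisors of Δ) is finite -/
  divDelta_finite : {s : G | s ∈ pos ∧ s⁻¹ * delta ∈ pos}.Finite
  /-- the simple elements generate `G` -/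
  divDelta_generates : Subgroup.closure {s : G | s ∈ pos ∧ s⁻¹ * delta ∈ pos} = ⊤
  /-- the atoms generate the positive monoid -/
  atoms_generate :
    Submonoid.closure {a : G | a ∈ pos ∧ a ≠ 1 ∧
      ∀ b ∈ pos, b⁻¹ * a ∈ pos → b = 1 ∨ b = a} = pos
  /-- every atom divides Δ -/
  atoms_divide_delta : ∀ a : G, a ∈ pos → a ≠ 1 →
    (∀ b ∈ pos, b⁻¹ * a ∈ pos → b = 1 ∨ b = a) → a⁻¹ * delta ∈ pos
  /-- every element is bounded below and above by powers of Δ -/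
  delta_bounds : ∀ x : G, ∃ p q : ℤ, p ≤ q ∧ (delta ^ p)⁻¹ * x ∈ pos ∧ x⁻¹ * delta ^ q ∈ pos
  /-- conjugation by Δ maps the positive monoid bijectively onto itself -/
  conj_delta : ∀ a : G, a ∈ pos ↔ delta * a * delta⁻¹ ∈ pos
  /-- some positive power of Δ is central -/
  central_power : ∃ n : ℕ, 0 < n ∧ delta ^ n ∈ Subgroup.center G
  /-- no infinite strictly decreasing (for the prefix order) sequence of positive elements -/
  no_infinite_descent : ¬ ∃ f : ℕ → G, (∀ n, f n ∈ pos) ∧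
    ∀ n, (f (n + 1))⁻¹ * f n ∈ pos ∧ f (n + 1) ≠ f n

namespace GarsideStructure

variable {G : Type*} [Group G] (S : GarsideStructure G)

/-- the prefix order: `a ≼ b` iff `a⁻¹ * b` is positive -/
def le (a b : G) : Prop := a⁻¹ * b ∈ S.pos

/-- the set of positive prefixes of an element -/
def Div (d : G) : Set G := {s : G | s ∈ S.pos ∧ S.le s d}

/-- atoms: nontrivial positive elements with no nontrivial proper positive prefix -/
def IsAtomic (a : G) : Prop :=
  a ∈ S.pos ∧ a ≠ 1 ∧ ∀ b ∈ S.pos, S.le b a → b = 1 ∨ b = a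

/-- the set of atoms -/
def atoms : Set G := {a : G | S.IsAtomic a}

/-- the left denominator of `x`: `D_L x = (1 ∧ x)⁻¹` -/
def DL (x : G) : G := (S.meet 1 x)⁻¹

/-- the left numerator of `x`: `N_L x = D_L x * x` -/
def NL (x : G) : G := S.DL x * x

/-- the (left) swap `φ(x) = N_L x * (D_L x)⁻¹ = D_L x * x * (D_L x)⁻¹` -/
def swap (x : G) : G := S.DL x * x * (S.DL x)⁻¹

/-- an element is recurrent if it is fixed by some positive iterate of the swap map -/
def Recurrent (x : G) : Prop := ∃ m : ℕ, 0 < m ∧ S.swap^[m] x = x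

/-- the set `R(x)` of recurrent conjugates of `x` -/
def Rset (x : G) : Set G := {y : G | IsConj x y ∧ S.Recurrent y}

/-- the set `C⁺(x)` of positive conjugates of `x` -/
def Cpos (x : G) : Set G := {y : G | IsConj x y ∧ y ∈ S.pos}

/-- the set `C⁻(x)` of negative conjugates of `x` -/
def Cneg (x : G) : Set G := {y : G | IsConj x y ∧ y⁻¹ ∈ S.pos}

/-- the transport of `u` at `y`: with `y = a⁻¹ b` reduced, `u^{(1)} = (a u) ∧ (b u)` -/
def transport (y u : G) : G := S.meet (S.DL y * u) (S.NL y * u)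

/-- `Δ_X`: the least upper bound for the prefix order of a set `X` (`1` if there is none) -/
noncomputable def deltaOf (X : Set G) : G :=
  if h : ∃ d : G, (∀ x ∈ X, S.le x d) ∧ ∀ c : G, (∀ x ∈ X, S.le x c) → S.le d c
  then h.choose else 1

/-- the closure `X̄ = Div(Δ_X) ∩ 𝒜` of a set of atoms -/
noncomputable def closureOf (X : Set G) : Set G := S.Div (S.deltaOf X) ∩ S.atoms

/-- the subgroup `G_X` generated by the closure of `X` -/
noncomputable def GX (X : Set G) : Subgroup G := Subgroup.closure (S.closureOf X)

/-- the support of an element: the closure of the set of atoms appearing in atom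
factorizations of its left denominator and left numerator -/
noncomputable def supp (x : G) : Set G :=
  if h : ∃ p : List G × List G,
      (∀ a ∈ p.1, a ∈ S.atoms) ∧ (∀ a ∈ p.2, a ∈ S.atoms) ∧
      p.1.prod = S.DL x ∧ p.2.prod = S.NL x
  then S.closureOf ({a : G | a ∈ h.choose.1} ∪ {a : G | a ∈ h.choose.2})
  else ∅

/-- an LCM-Garside structure -/
structure IsLCM : Prop where
  delta_eq : S.delta = S.deltaOf S.atoms
  balanced : ∀ X ⊆ S.atoms, ∀ s ∈ S.pos,
    (S.le s (S.deltaOf X) ↔ S.deltaOf X * s⁻¹ ∈ S.pos)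
  div_eq : ∀ X ⊆ S.atoms,
    S.Div (S.deltaOf X) = S.Div S.delta ∩ {g : G | g ∈ S.GX X ∧ g ∈ S.pos}
  factor_closed : ∀ X ⊆ S.atoms, ∀ g : G, g ∈ S.GX X → g ∈ S.pos →
    ∀ a b : G, a ∈ S.pos → b ∈ S.pos → g = a * b → a ∈ S.GX X ∧ b ∈ S.GX X
  lattice_closed : ∀ X ⊆ S.atoms, ∀ a b : G, a ∈ S.GX X → b ∈ S.GX X →
    S.meet a b ∈ S.GX X ∧ S.join a b ∈ S.GX X
  fraction_closed : ∀ X ⊆ S.atoms, ∀ g : G, g ∈ S.GX X →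
    S.DL g ∈ S.GX X ∧ S.NL g ∈ S.GX X

/-- a standard parabolic subgroup: the subgroup generated by a saturated set of atoms -/
noncomputable def IsStandardParabolic (H : Subgroup G) : Prop :=
  ∃ X : Set G, X ⊆ S.atoms ∧ S.closureOf X = X ∧ H = S.GX X

/-- a parabolic subgroup: a conjugate of a standard parabolic subgroup -/
noncomputable def IsParabolic (H : Subgroup G) : Prop :=
  ∃ (P : Subgroup G) (c : G), S.IsStandardParabolic P ∧
    H = Subgroup.map (MulAut.conj c).toMonoidHom P

/-- the structure is support-preserving if conjugations between positive elements
conjugate the corresponding parabolic subgroups of the supports -/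
noncomputable def SupportPreserving : Prop :=
  ∀ y ∈ S.pos, ∀ z ∈ S.pos, ∀ α : G, α⁻¹ * y * α = z →
    Subgroup.map (MulAut.conj α⁻¹).toMonoidHom (S.GX (S.supp y)) = S.GX (S.supp z)

/-- `P` is the parabolic closure of `x` -/
noncomputable def IsParabolicClosure (x : G) (P : Subgroup G) : Prop :=
  S.IsParabolic P ∧ x ∈ P ∧ ∀ H : Subgroup G, S.IsParabolic H → x ∈ H → P ≤ H

end GarsideStructure


namespace GarsideStructure

variable {G : Type*} [Group G] (S : GarsideStructure G)

theorem le_trans {a b c : G} (hab : S.le a b) (hbc : S.le b c) : S.le a c := by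
  have h := S.pos.mul_mem hab hbc
  rwa [show a⁻¹ * b * (b⁻¹ * c) = a⁻¹ * c by group] at h

theorem mul_le_mul_left_iff (g : G) {a b : G} : S.le (g * a) (g * b) ↔ S.le a b := by
  simp [le, mul_assoc]

theorem conj_delta_zpow_mem (k : ℤ) {a : G} (ha : a ∈ S.pos) :
    S.delta ^ k * a * (S.delta ^ k)⁻¹ ∈ S.pos := by
  induction k with
  | zero => simpa using ha
  | succ n ih =>
    rw [S.conj_delta] at ih
    convert ih using 1
    rw [add_comm, zpow_add, zpow_one]
    group
  | pred n ih =>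
    rw [S.conj_delta]
    convert ih using 1
    rw [sub_eq_add_neg, add_comm, zpow_add, zpow_neg_one]
    group

theorem mul_delta_zpow_le_mul_delta_zpow (k : ℤ) {a b : G} (h : S.le a b) :
    S.le (a * S.delta ^ k) (b * S.delta ^ k) := by
  have h' := S.conj_delta_zpow_mem (-k) h
  rw [zpow_neg, inv_inv] at h'
  simpa [le, mul_assoc] using h'

/-- Right multiplication by a power of `Δ` commutes with meets. -/
theorem le_meet_mul_delta_zpow (k : ℤ) {a b c : G} (ha : S.le c (a * S.delta ^ k))
    (hb : S.le c (b * S.delta ^ k)) : S.le c (S.meet a b * S.delta ^ k) := by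
  have hca := S.mul_delta_zpow_le_mul_delta_zpow (-k) ha
  have hcb := S.mul_delta_zpow_le_mul_delta_zpow (-k) hb
  rw [mul_assoc, ← zpow_add, add_neg_cancel, zpow_zero, mul_one] at hca hcb
  have h := S.mul_delta_zpow_le_mul_delta_zpow k (S.le_meet a b _ hca hcb)
  rwa [mul_assoc, ← zpow_add, neg_add_cancel, zpow_zero, mul_one] at h

theorem delta_zpow_le_delta_zpow {j k : ℤ} (h : j ≤ k) :
    S.le (S.delta ^ j) (S.delta ^ k) := by
  obtain ⟨n, rfl⟩ := Int.le.dest h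
  simpa [le, zpow_add] using S.pos.pow_mem S.delta_pos n

/-- The interval between two powers of `Δ` around `1` is stable under the swap. -/
theorem swap_mem_interval {p q : ℤ} (hp : p ≤ 0) (hq : 0 ≤ q) {x : G}
    (hpx : S.le (S.delta ^ p) x) (hxq : S.le x (S.delta ^ q)) :
    S.le (S.delta ^ p) (S.swap x) ∧ S.le (S.swap x) (S.delta ^ q) := by
  have hp1 : S.le (S.delta ^ p) 1 := by simpa using S.delta_zpow_le_delta_zpow hp
  have hq1 : S.le 1 (S.delta ^ q) := by simpa using S.delta_zpow_le_delta_zpow hq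
  have he1 : S.le (S.meet 1 x) 1 := S.meet_le_left 1 x
  have hex : S.le (S.meet 1 x) x := S.meet_le_right 1 x
  have hswap : S.meet 1 x * S.swap x = x * S.meet 1 x := by simp [swap, DL, mul_assoc]
  rw [← S.mul_le_mul_left_iff (S.meet 1 x), ← S.mul_le_mul_left_iff (S.meet 1 x) (a := S.swap x),
    hswap]
  constructor
  · refine S.le_trans (S.mul_delta_zpow_le_mul_delta_zpow p hex)
      ((S.mul_le_mul_left_iff x).2 (S.le_meet 1 x _ hp1 hpx))
  · refine S.le_meet_mul_delta_zpow q ?_ ((S.mul_le_mul_left_iff x).2 (S.le_trans he1 hq1))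
    rw [one_mul]
    refine S.le_trans ?_ hxq
    simpa using (S.mul_le_mul_left_iff x).2 he1

theorem div_delta_pow_succ_subset (n : ℕ) :
    S.Div (S.delta ^ (n + 1)) ⊆ S.Div (S.delta ^ n) * S.Div S.delta := by
  rintro s ⟨hs, hsn⟩
  refine ⟨S.meet s (S.delta ^ n), ⟨?_, S.meet_le_right _ _⟩,
    (S.meet s (S.delta ^ n))⁻¹ * s, ⟨S.meet_le_left _ _, ?_⟩, by simp⟩
  · simpa using S.le_meet s (S.delta ^ n) 1 (by simpa using hs)
      (by simpa using S.pos.pow_mem S.delta_pos n)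
  · rw [← S.mul_le_mul_left_iff (S.meet s (S.delta ^ n)), mul_inv_cancel_left]
    have h := S.le_meet_mul_delta_zpow 1 (a := s) (b := S.delta ^ n) (c := s)
      (by simpa [le] using S.delta_pos) (by simpa [pow_succ] using hsn)
    simpa using h

theorem finite_div_delta_pow (n : ℕ) : (S.Div (S.delta ^ n)).Finite := by
  induction n with
  | zero =>
    refine (Set.finite_singleton (1 : G)).subset ?_
    rintro s ⟨hs, hs'⟩
    exact S.units_triv s hs (by simpa [le] using hs')
  | succ n ih => exact (ih.mul S.divDelta_finite).subset (S.div_delta_pow_succ_subset n)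

theorem finite_interval {p q : ℤ} (hpq : p ≤ q) :
    {y : G | S.le (S.delta ^ p) y ∧ S.le y (S.delta ^ q)}.Finite := by
  obtain ⟨n, rfl⟩ := Int.le.dest hpq
  refine ((S.finite_div_delta_pow n).image (S.delta ^ p * ·)).subset ?_
  rintro y ⟨hpy, hyq⟩
  refine ⟨(S.delta ^ p)⁻¹ * y, ⟨hpy, ?_⟩, by simp⟩
  rw [← S.mul_le_mul_left_iff (S.delta ^ p), mul_inv_cancel_left]
  simpa [zpow_add] using hyq

theorem exists_lt_iterate_swap_eq (x : G) :
    ∃ m n : ℕ, m < n ∧ S.swap^[m] x = S.swap^[n] x := by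
  obtain ⟨p, q, -, hpx, hxq⟩ := S.delta_bounds x
  have hp : min p 0 ≤ 0 := min_le_right _ _
  have hq : 0 ≤ max q 0 := le_max_right _ _
  refine (S.finite_interval (hp.trans hq)).exists_lt_map_eq_of_forall_mem fun n ↦ ?_
  induction n with
  | zero =>
    exact ⟨S.le_trans (S.delta_zpow_le_delta_zpow (min_le_left _ _)) hpx,
      S.le_trans hxq (S.delta_zpow_le_delta_zpow (le_max_left _ _))⟩
  | succ n ih =>
    rw [Function.iterate_succ_apply']
    exact S.swap_mem_interval hp hq ih.1 ih.2

end GarsideStructure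

/-- the swap orbit of every element is eventually periodic, and the
elements on the periodic part are recurrent. -/
theorem garside_swap_eventually_periodic {G : Type*} [Group G]
    (S : GarsideStructure G) (x : G) :
    ∃ m n : ℕ, m < n ∧ S.swap^[m] x = S.swap^[n] x ∧
      ∀ k : ℕ, m ≤ k → k < n → S.Recurrent (S.swap^[k] x) := by
  obtain ⟨m, n, hmn, heq⟩ := S.exists_lt_iterate_swap_eq x
  refine ⟨m, n, hmn, heq, fun k hmk _ ↦ ⟨n - m, Nat.sub_pos_of_lt hmn, ?_⟩⟩
  calc S.swap^[n - m] (S.swap^[k] x) = S.swap^[k - m] (S.swap^[n] x) := by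
        rw [← Function.iterate_add_apply, ← Function.iterate_add_apply,
          show n - m + k = k - m + n by omega]
    _ = S.swap^[k] x := by
        rw [← heq, ← Function.iterate_add_apply, Nat.sub_add_cancel hmk]
end

section
/- Let (G, G⁺, Δ) be a Garside structure and x ∈ G. If x is conjugate in G to an element of G⁺, then φ^m(x) ∈ G⁺ for some m ≥ 0. -/
open scoped Pointwise Classical

namespace GarsideStructure

variable {G : Type*} [Group G] (S : GarsideStructure G)

theorem DL_mem_pos (x : G) : S.DL x ∈ S.pos := by
  simpa [DL] using S.meet_le_left 1 x

theorem mem_pos_of_DL_eq_one {x : G} (h : S.DL x = 1) : x ∈ S.pos := by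
  have h₁ : S.meet 1 x = 1 := inv_eq_one.mp h
  simpa [h₁] using S.meet_le_right 1 x

/-- The left denominator of `x` is a suffix of every positive `v` with `v * x` positive. -/
theorem mul_inv_DL_mem_pos {v x : G} (hv : v ∈ S.pos) (hvx : v * x ∈ S.pos) :
    v * (S.DL x)⁻¹ ∈ S.pos := by
  simpa [DL] using S.le_meet 1 x v⁻¹ (by simpa using hv) (by simpa using hvx)

/-- Any element can be made positive by multiplication by a central element. -/
theorem exists_center_mul_mem_pos (v : G) : ∃ c ∈ Subgroup.center G, c * v ∈ S.pos := by
  obtain ⟨n, hn, hc⟩ := S.central_power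
  obtain ⟨p, -, -, hp, -⟩ := S.delta_bounds v
  refine ⟨(S.delta ^ n) ^ p.natAbs, pow_mem hc _, ?_⟩
  obtain ⟨k, hk⟩ : ∃ k : ℕ, (k : ℤ) = (n * p.natAbs : ℕ) + p := by
    refine ⟨((n * p.natAbs : ℕ) + p).toNat, Int.toNat_of_nonneg ?_⟩
    have h₁ : p.natAbs ≤ n * p.natAbs := Nat.le_mul_of_pos_left _ hn
    omega
  have h₂ : (S.delta ^ n) ^ p.natAbs * v = S.delta ^ k * ((S.delta ^ p)⁻¹ * v) := by
    rw [← pow_mul, ← zpow_natCast, ← zpow_natCast, hk, zpow_add]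
    group
  rw [h₂]
  exact mul_mem (pow_mem S.delta_pos k) hp

/-- The partial quotients `v * (D_L x)⁻¹ * (D_L (φ x))⁻¹ * ⋯` along the swap orbit of `x`. -/
def swapQuotient (x v : G) : ℕ → G
  | 0 => v
  | n + 1 => swapQuotient x v n * (S.DL (S.swap^[n] x))⁻¹

theorem swapQuotient_mem_pos {x v : G} (hv : v ∈ S.pos) (hz : v * x * v⁻¹ ∈ S.pos) (n : ℕ) :
    S.swapQuotient x v n ∈ S.pos ∧
      S.swapQuotient x v n * S.swap^[n] x * (S.swapQuotient x v n)⁻¹ = v * x * v⁻¹ := by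
  induction n with
  | zero => exact ⟨hv, rfl⟩
  | succ n ih =>
    obtain ⟨hq, hconj⟩ := ih
    refine ⟨S.mul_inv_DL_mem_pos hq ?_, ?_⟩
    · rw [mul_inv_eq_iff_eq_mul.mp hconj]
      exact mul_mem hz hq
    · rw [← hconj, Function.iterate_succ_apply', swapQuotient, swap]
      group

end GarsideStructure

/-- if `x` is conjugate to a positive element, then some iterated swap
of `x` is positive. -/
theorem garside_swap_reaches_positive {G : Type*} [Group G]
    (S : GarsideStructure G) (x : G) (h : ∃ y ∈ S.pos, IsConj x y) :
    ∃ m : ℕ, S.swap^[m] x ∈ S.pos := by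
  obtain ⟨y, hy, hxy⟩ := h
  obtain ⟨w, rfl⟩ := isConj_iff.mp hxy
  obtain ⟨c, hc, hv⟩ := S.exists_center_mul_mem_pos w
  have hz : c * w * x * (c * w)⁻¹ ∈ S.pos := by
    have hcomm := Subgroup.mem_center_iff.mp hc (w * x * w⁻¹)
    have heq : c * w * x * (c * w)⁻¹ = w * x * w⁻¹ := by
      rw [show c * w * x * (c * w)⁻¹ = c * (w * x * w⁻¹) * c⁻¹ by group, ← hcomm,
        mul_inv_cancel_right]
    rwa [heq]
  by_contra! hneg
  refine S.no_infinite_descent ⟨S.swapQuotient x (c * w),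
    fun n => (S.swapQuotient_mem_pos hv hz n).1, fun n => ⟨?_, fun heq => ?_⟩⟩
  · simpa [GarsideStructure.swapQuotient] using S.DL_mem_pos (S.swap^[n] x)
  · exact hneg n (S.mem_pos_of_DL_eq_one (by simpa [GarsideStructure.swapQuotient] using heq))
end

section
/- Let (G, G⁺, Δ) be a Garside structure and x ∈ G. (1) If x is conjugate to an element of G⁺, then R(x) = C⁺(x). (2) If x is conjugate to a negative element (an element whose inverse lies in G⁺), then R(x) = C⁻(x) = (C⁺(x⁻¹))⁻¹, where C⁻(x) denotes the set of negative elements conjugate to x. -/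
open scoped Pointwise Classical

namespace GarsideStructure

variable {G : Type*} [Group G] (S : GarsideStructure G)

/-- The prefix order is antisymmetric. -/
theorem eq_of_le_of_le {a b : G} (hab : a⁻¹ * b ∈ S.pos) (hba : b⁻¹ * a ∈ S.pos) : a = b :=
  inv_mul_eq_one.mp (S.units_triv _ hab (by simpa using hba))

/-- An element above `1` in the prefix order has trivial meet with `1`. -/
theorem meet_one_of_pos {y : G} (hy : y ∈ S.pos) : S.meet 1 y = 1 :=
  S.eq_of_le_of_le (S.meet_le_left 1 y)
    (S.le_meet 1 y 1 (by simp) (by simpa using hy))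

theorem pos_of_meet_one {y : G} (hy : S.meet 1 y = 1) : y ∈ S.pos := by
  simpa [hy] using S.meet_le_right 1 y

/-- Positive elements are fixed by the swap. -/
theorem swap_of_pos {y : G} (hy : y ∈ S.pos) : S.swap y = y := by
  simp [swap, DL, S.meet_one_of_pos hy]

/-- Left translation invariance of the meet, applied to `1 ∧ y` and `y⁻¹ ∧ 1`. -/
theorem meet_one_inv (y : G) : S.meet 1 y⁻¹ = y⁻¹ * S.meet 1 y := by
  refine S.eq_of_le_of_le ?_ ?_
  · have h := S.le_meet 1 y (y * S.meet 1 y⁻¹)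
      (by simpa [mul_assoc] using S.meet_le_right 1 y⁻¹)
      (by simpa [mul_assoc] using S.meet_le_left 1 y⁻¹)
    simpa [mul_assoc] using h
  · exact S.le_meet 1 y⁻¹ (y⁻¹ * S.meet 1 y)
      (by simpa [mul_assoc] using S.meet_le_right 1 y)
      (by simpa [mul_assoc] using S.meet_le_left 1 y)

theorem swap_inv (y : G) : S.swap y⁻¹ = (S.swap y)⁻¹ := by
  simp [swap, DL, S.meet_one_inv, mul_assoc]

theorem recurrent_inv {y : G} (hy : S.Recurrent y) : S.Recurrent y⁻¹ := by
  obtain ⟨m, hm, h⟩ := hy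
  exact ⟨m, hm, by rw [← (show Function.Semiconj (·⁻¹) S.swap S.swap from
    fun z => (S.swap_inv z).symm).iterate_right m |>.eq, h]⟩

/-- Every element becomes positive after left multiplication by a central element. -/
theorem exists_central_mul_pos (c : G) : ∃ z ∈ Subgroup.center G, z * c ∈ S.pos := by
  obtain ⟨n, hn, hcentral⟩ := S.central_power
  obtain ⟨p, -, -, hp, -⟩ := S.delta_bounds c
  have hdiff : (0 : ℤ) ≤ n * p.natAbs + p := by
    have h1 : (1 : ℤ) ≤ n := by exact_mod_cast hn
    have h2 : -(p.natAbs : ℤ) ≤ p := by omega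
    nlinarith [Int.natCast_nonneg p.natAbs]
  obtain ⟨k, hk⟩ := Int.eq_ofNat_of_zero_le hdiff
  refine ⟨(S.delta ^ n) ^ p.natAbs, Subgroup.pow_mem _ hcentral _, ?_⟩
  have hsplit : (S.delta ^ n) ^ p.natAbs * c = S.delta ^ k * ((S.delta ^ p)⁻¹ * c) := by
    rw [← zpow_natCast S.delta k, ← hk, zpow_add, ← pow_mul, ← zpow_natCast S.delta (n * _)]
    push_cast
    group
  rw [hsplit]
  exact S.pos.mul_mem (S.pos.pow_mem S.delta_pos k) hp

/-- Conjugate elements are conjugate by a positive element. -/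
theorem exists_pos_conj {y z : G} (h : IsConj y z) : ∃ c ∈ S.pos, c * y * c⁻¹ = z := by
  obtain ⟨c, hc⟩ := isConj_iff.mp h
  obtain ⟨d, hd, hpos⟩ := S.exists_central_mul_pos c
  refine ⟨d * c, hpos, ?_⟩
  rw [← hc]
  have := Subgroup.mem_center_iff.mp hd (c * y * c⁻¹)
  calc d * c * y * (d * c)⁻¹ = d * (c * y * c⁻¹) * d⁻¹ := by group
    _ = c * y * c⁻¹ := by rw [← this]; group

/-- If the positive element `c` conjugates `y` to a positive element, then the left denominator
of `y` is a suffix of `c`. -/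
theorem mul_meet_pos {y c : G} (hc : c ∈ S.pos) (h : c * y * c⁻¹ ∈ S.pos) :
    c * S.meet 1 y ∈ S.pos := by
  have := S.le_meet 1 y c⁻¹ (by simpa using hc) (by simpa using S.pos.mul_mem h hc)
  simpa using this

/-- Iterated swaps of a conjugate of a positive element reach a positive element. -/
theorem exists_iterate_swap_pos {y z : G} (hz : z ∈ S.pos) (h : IsConj y z) :
    ∃ m : ℕ, S.swap^[m] y ∈ S.pos := by
  obtain ⟨c, hc, hcz⟩ := S.exists_pos_conj h
  by_contra! hnot
  let f : ℕ → G := fun n => Nat.rec c (fun n g => g * S.meet 1 (S.swap^[n] y)) n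
  have hf : ∀ n, f (n + 1) = f n * S.meet 1 (S.swap^[n] y) := fun _ => rfl
  have hinv : ∀ n, f n ∈ S.pos ∧ f n * S.swap^[n] y * (f n)⁻¹ = z := by
    intro n
    induction n with
    | zero => exact ⟨hc, hcz⟩
    | succ n ih =>
      refine ⟨S.mul_meet_pos ih.1 (ih.2 ▸ hz), ?_⟩
      rw [hf, Function.iterate_succ_apply', ← ih.2]
      simp only [swap, DL]
      group
  refine S.no_infinite_descent ⟨f, fun n => (hinv n).1, fun n => ⟨?_, fun heq => ?_⟩⟩
  · simpa [hf] using S.meet_le_left 1 (S.swap^[n] y)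
  · exact hnot n (S.pos_of_meet_one (by simpa [hf] using heq))

theorem pos_of_recurrent {y z : G} (hz : z ∈ S.pos) (h : IsConj y z) (hy : S.Recurrent y) :
    y ∈ S.pos := by
  obtain ⟨k, hk, hyk⟩ := hy
  obtain ⟨m, hm⟩ := S.exists_iterate_swap_pos hz h
  have hper : S.swap^[k * m] y = y := Function.IsPeriodicPt.mul_const hyk m
  obtain ⟨j, hj⟩ := Nat.exists_eq_add_of_le' (Nat.le_mul_of_pos_left m hk)
  rw [hj, Function.iterate_add_apply,
    Function.iterate_fixed (S.swap_of_pos hm)] at hper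
  exact hper ▸ hm

theorem rset_eq_cpos {x : G} (h : ∃ y ∈ S.pos, IsConj x y) : S.Rset x = S.Cpos x := by
  obtain ⟨z, hz, hxz⟩ := h
  ext y
  exact and_congr_right fun hxy =>
    ⟨S.pos_of_recurrent hz (hxy.symm.trans hxz), fun hy => ⟨1, one_pos, S.swap_of_pos hy⟩⟩

theorem isConj_inv_inv {x y : G} (h : IsConj x y) : IsConj x⁻¹ y⁻¹ := by
  obtain ⟨c, rfl⟩ := isConj_iff.mp h
  exact isConj_iff.mpr ⟨c, by group⟩

theorem isConj_inv_iff {x y : G} : IsConj x⁻¹ y⁻¹ ↔ IsConj x y :=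
  ⟨fun h => by simpa using isConj_inv_inv h, isConj_inv_inv⟩

theorem rset_inv (x : G) : (S.Rset x⁻¹)⁻¹ = S.Rset x := by
  ext y
  exact and_congr isConj_inv_iff
    ⟨fun h => by simpa using S.recurrent_inv h, S.recurrent_inv⟩

theorem cpos_inv (x : G) : (S.Cpos x⁻¹)⁻¹ = S.Cneg x := by
  ext y
  exact and_congr_left' isConj_inv_iff

end GarsideStructure

/-- if `x` is conjugate to a positive element then its recurrent conjugates
are exactly its positive conjugates; if `x` is conjugate to a negative element then its
recurrent conjugates are exactly its negative conjugates, which are the inverses of the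
positive conjugates of `x⁻¹`. -/
theorem garside_recurrent_eq_positive_or_negative {G : Type*} [Group G]
    (S : GarsideStructure G) (x : G) :
    ((∃ y ∈ S.pos, IsConj x y) → S.Rset x = S.Cpos x) ∧
    ((∃ y : G, y⁻¹ ∈ S.pos ∧ IsConj x y) →
      S.Rset x = S.Cneg x ∧ S.Cneg x = (S.Cpos x⁻¹)⁻¹) := by
  refine ⟨S.rset_eq_cpos, fun ⟨z, hz, hxz⟩ => ⟨?_, (S.cpos_inv x).symm⟩⟩
  rw [← S.rset_inv, S.rset_eq_cpos ⟨z⁻¹, hz, GarsideStructure.isConj_inv_inv hxz⟩, S.cpos_inv]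
end

section
/- Let (G, G⁺, Δ) be a Garside structure, let y ∈ G have reduced left-fraction decomposition y = a⁻¹b, and for w ∈ G⁺ let w^{(1)} = aw ∧ bw be its transport at y. Then: (1) (Δ^m)^{(1)} = Δ^m for every integer m ≥ 0; (2) (u ∧ v)^{(1)} = u^{(1)} ∧ v^{(1)} for all u, v ∈ G⁺; (3) if u, v ∈ G⁺ and u ≼ v, then u^{(1)} ≼ v^{(1)}. -/
open scoped Pointwise Classical

namespace GarsideStructure

section Transport

variable {G : Type*} [Group G] (S : GarsideStructure G)

theorem le_refl (x : G) : S.le x x := by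
  simp [le, S.pos.one_mem]

theorem le_trans_s10 {x y z : G} (hxy : S.le x y) (hyz : S.le y z) : S.le x z := by
  simpa [le, mul_assoc] using S.pos.mul_mem hxy hyz

theorem le_antisymm {x y : G} (hxy : S.le x y) (hyx : S.le y x) : x = y :=
  inv_mul_eq_one.mp (S.units_triv _ hxy (by simpa [le] using hyx))

theorem eq_of_forall_le_iff {x y : G} (h : ∀ z, S.le z x ↔ S.le z y) : x = y :=
  S.le_antisymm ((h x).mp (S.le_refl x)) ((h y).mpr (S.le_refl y))

theorem le_meet_iff {x y z : G} : S.le z (S.meet x y) ↔ S.le z x ∧ S.le z y :=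
  ⟨fun h => ⟨S.le_trans_s10 h (S.meet_le_left x y), S.le_trans_s10 h (S.meet_le_right x y)⟩,
    fun h => S.le_meet x y z h.1 h.2⟩

/-- The prefix order is invariant under left multiplication. -/
theorem le_mul_left_iff {c x z : G} : S.le z (c * x) ↔ S.le (c⁻¹ * z) x := by
  simp [le, mul_assoc]

/-- The prefix order is invariant under right multiplication by powers of `Δ`. -/
theorem le_mul_delta_pow_iff (m : ℕ) {x z : G} :
    S.le (z * S.delta ^ m) (x * S.delta ^ m) ↔ S.le z x := by
  induction m generalizing x z with
  | zero => simp
  | succ m ih =>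
    rw [pow_succ', ← mul_assoc, ← mul_assoc, ih]
    unfold le
    rw [S.conj_delta]
    simp [mul_assoc]

theorem le_transport_iff {y u z : G} :
    S.le z (S.transport y u) ↔ S.le z (S.DL y * u) ∧ S.le z (S.NL y * u) :=
  S.le_meet_iff

/-- The left-fraction decomposition is reduced. -/
theorem meet_DL_NL (y : G) : S.meet (S.DL y) (S.NL y) = 1 := by
  refine S.eq_of_forall_le_iff fun z => ?_
  rw [le_meet_iff, NL, ← mul_one (S.DL y), mul_assoc, one_mul, le_mul_left_iff,
    S.le_mul_left_iff (x := y), ← le_meet_iff, ← le_mul_left_iff, DL, inv_mul_cancel]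

theorem transport_delta_pow (y : G) (m : ℕ) :
    S.transport y (S.delta ^ m) = S.delta ^ m := by
  refine S.eq_of_forall_le_iff fun z => ?_
  obtain ⟨w, rfl⟩ : ∃ w, z = w * S.delta ^ m := ⟨z * (S.delta ^ m)⁻¹, by simp⟩
  rw [le_transport_iff, le_mul_delta_pow_iff, le_mul_delta_pow_iff, ← le_meet_iff,
    meet_DL_NL, ← S.le_mul_delta_pow_iff m, one_mul]

theorem transport_meet (y u v : G) :
    S.transport y (S.meet u v) = S.meet (S.transport y u) (S.transport y v) := by
  refine S.eq_of_forall_le_iff fun z => ?_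
  simp only [le_transport_iff, le_meet_iff, le_mul_left_iff]
  tauto

theorem transport_mono (y : G) {u v : G} (h : S.le u v) :
    S.le (S.transport y u) (S.transport y v) := by
  have hu := S.le_transport_iff.mp (S.le_refl (S.transport y u))
  rw [le_mul_left_iff, le_mul_left_iff] at hu
  rw [le_transport_iff, le_mul_left_iff, le_mul_left_iff]
  exact ⟨S.le_trans_s10 hu.1 h, S.le_trans_s10 hu.2 h⟩

end Transport

end GarsideStructure

/-- properties of the transport at a fixed element `y`:
transport fixes nonnegative powers of `Δ`, commutes with meets of positive elements,
and is monotone for the prefix order on positive elements. -/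
theorem garside_transport_properties {G : Type*} [Group G]
    (S : GarsideStructure G) (y : G) :
    (∀ m : ℕ, S.transport y (S.delta ^ m) = S.delta ^ m) ∧
    (∀ u v : G, u ∈ S.pos → v ∈ S.pos →
      S.transport y (S.meet u v) = S.meet (S.transport y u) (S.transport y v)) ∧
    (∀ u v : G, u ∈ S.pos → v ∈ S.pos → S.le u v →
      S.le (S.transport y u) (S.transport y v)) := by
  exact ⟨S.transport_delta_pow y, fun u v _ _ => S.transport_meet y u v,
    fun _ _ _ _ h => S.transport_mono y h⟩
end
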